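/- Let $t \ge 0$ be a real number, let $X$ be a finite type with group assignment $\psi : X \to \mathrm{Bool}$, and for a finite set $S \subseteq X$ containing points of both groups define $balance(S) = \min\bigl(|\{x \in S : \psi(x) = \mathrm{true}\}| / |\{x \in S : \psi(x) = \mathrm{false}\}|,\; |\{x \in S : \psi(x) = \mathrm{false}\}| / |\{x \in S : \psi(x) = \mathrm{true}\}|\bigr)$ (real-valued division of cardinalities). Suppose $F_1, \dots, F_l$ are pairwise disjoint finite subsets of $X$, each containing at least one point of each group and each satisfying $balance(F_j) \ge t$. Let $C_1, \dots, C_k$ be clusters, each of which is a union of a nonempty subfamily of the fairlets, with every fairlet assigned to exactly one cluster. Then $\min_{1 \le i \le k} balance(C_i) \ge t$. -/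

import Mathlib

/-- The balance of a finite set `S` w.r.t. a binary group assignment `ψ`:
the minimum of the two ratios of group cardinalities (Eq. 3 of the paper). -/
noncomputable def balance {X : Type*} [DecidableEq X] (ψ : X → Bool) (S : Finset X) : ℝ :=
  min ((((S.filter fun x => ψ x = true).card : ℝ)) / (((S.filter fun x => ψ x = false).card : ℝ)))
      ((((S.filter fun x => ψ x = false).card : ℝ)) / (((S.filter fun x => ψ x = true).card : ℝ)))

theorem le_sum_div_sum {ι K : Type*} [DivisionSemiring K] [LinearOrder K] [IsStrictOrderedRing K]
    {s : Finset ι} {a b : ι → K} {t : K} (hs : s.Nonempty) (hb : ∀ i ∈ s, 0 < b i)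
    (h : ∀ i ∈ s, t ≤ a i / b i) : t ≤ (∑ i ∈ s, a i) / ∑ i ∈ s, b i := by
  rw [le_div_iff₀ (Finset.sum_pos hb hs), Finset.mul_sum]
  exact Finset.sum_le_sum fun i hi => (le_div_iff₀ (hb i hi)).mp (h i hi)

theorem card_filter_biUnion {ι X : Type*} [DecidableEq X] {s : Finset ι} {F : ι → Finset X}
    (hF : (s : Set ι).PairwiseDisjoint F) (p : X → Prop) [DecidablePred p] :
    ((s.biUnion F).filter p).card = ∑ i ∈ s, ((F i).filter p).card := by
  rw [Finset.filter_biUnion, Finset.card_biUnion]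
  exact hF.mono fun i => Finset.filter_subset p (F i)

section Balance

variable {X ι : Type*} [DecidableEq X] {ψ : X → Bool} {t : ℝ}

theorem le_balance_iff {S : Finset X} :
    t ≤ balance ψ S ↔ ∀ g : Bool,
      t ≤ ((S.filter fun x => ψ x = g).card : ℝ) / ((S.filter fun x => ψ x = !g).card : ℝ) := by
  rw [balance, le_min_iff, Bool.forall_bool, Bool.not_false, Bool.not_true, and_comm]

-- Each group ratio of a disjoint union is the mediant of the corresponding ratios of its parts,
-- so it is at least the smallest of them.
theorem le_balance_biUnion {s : Finset ι} {F : ι → Finset X} (hs : s.Nonempty)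
    (hdisj : (s : Set ι).PairwiseDisjoint F) (hboth : ∀ j ∈ s, ∀ g, ∃ x ∈ F j, ψ x = g)
    (hbal : ∀ j ∈ s, t ≤ balance ψ (F j)) : t ≤ balance ψ (s.biUnion F) := by
  refine le_balance_iff.mpr fun g => ?_
  have hpos : ∀ j ∈ s, (0 : ℝ) < ((F j).filter fun x => ψ x = !g).card := fun j hj =>
    Nat.cast_pos.mpr <| Finset.card_pos.mpr <| Finset.filter_nonempty_iff.mpr <| hboth j hj !g
  rw [card_filter_biUnion hdisj, card_filter_biUnion hdisj, Nat.cast_sum, Nat.cast_sum]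
  exact le_sum_div_sum hs hpos fun j hj => le_balance_iff.mp (hbal j hj) g

theorem clustering_balance_ge_of_fairlets_general {κ : Type*} [Fintype ι] [Fintype κ] [Nonempty κ]
    [DecidableEq κ] {F : ι → Finset X} (hdisj : Pairwise (Function.onFun Disjoint F))
    (hboth : ∀ j g, ∃ x ∈ F j, ψ x = g) (hbal : ∀ j, t ≤ balance ψ (F j))
    {δ : ι → κ} (hsurj : Function.Surjective δ) :
    t ≤ Finset.univ.inf' Finset.univ_nonempty fun i =>
      balance ψ ((Finset.univ.filter fun j => δ j = i).biUnion F) := by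
  refine Finset.le_inf' _ _ fun i _ => ?_
  obtain ⟨j₀, hj₀⟩ := hsurj i
  have hfiber : (Finset.univ.filter fun j => δ j = i).Nonempty :=
    ⟨j₀, Finset.mem_filter_univ j₀ |>.mpr hj₀⟩
  exact le_balance_biUnion hfiber (hdisj.set_pairwise _) (fun j _ => hboth j) fun j _ => hbal j

end Balance

theorem clustering_balance_ge_of_fairlets {X : Type*} [Fintype X] [DecidableEq X]
    (ψ : X → Bool) (t : ℝ) (ht : 0 ≤ t)
    (l : ℕ) (F : Fin l → Finset X)
    (hdisj : ∀ i j, i ≠ j → Disjoint (F i) (F j))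
    (hboth : ∀ j, (∃ x ∈ F j, ψ x = true) ∧ (∃ x ∈ F j, ψ x = false))
    (hbal : ∀ j, balance ψ (F j) ≥ t)
    (k : ℕ) (hk : 0 < k)
    (δ : Fin l → Fin k) (hsurj : Function.Surjective δ)
    (C : Fin k → Finset X)
    (hC : ∀ i, C i = (Finset.univ.filter fun j => δ j = i).biUnion F) :
    Finset.univ.inf' (Finset.univ_nonempty_iff.mpr ⟨⟨0, hk⟩⟩)
      (fun i => balance ψ (C i)) ≥ t := by
  have : Nonempty (Fin k) := ⟨⟨0, hk⟩⟩
  simpa only [hC] using clustering_balance_ge_of_fairlets_general (fun i j => hdisj i j)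
    (fun j => Bool.forall_bool.mpr (hboth j).symm) hbal hsurj
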